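/- arXiv:2508.21667 — 2 statements merged into one kernel-verified Lean document; each statement's English description precedes it below -/
import Mathlib

section
/- Let m be a positive integer, s an integer with 1 ≤ s ≤ 2^m, A : Fin s → ℝ with A p > 0 for all p, α = ∑_{p<s} A p, and σ : Fin s → ℂ with ‖σ p‖ = 1 for all p. Suppose PREP is a unitary 2^m × 2^m matrix whose 0-th column has p-th entry σ p · √(A p)/√α for p < s and 0 for p ≥ s, and UNPREP is a unitary 2^m × 2^m matrix such that the p-th entry of UNPREP† e₀ is √(A p)/√α for p < s and 0 for p ≥ s. Then for any positive integer n and all i, j ∈ Fin 2^n, the unitary U = (UNPREP ⊗ I) · (PREP ⊗ I) on ℂ^(2^m) ⊗ ℂ² ⊗ ℂ^(2^n) satisfies ⟨e_{(0,0,i)}, U e_{(0,0,j)}⟩ = η · δ_{i,j}, where η = (∑_{p<s} σ p · A p)/α; that is, without the index-mapping oracle the block-encoded matrix is η times the identity. -/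
/-!
Everything acts on the data register only: by the mixed-product property the product is
`(UNPREP * PREP) ⊗ₖ 1`, so the whole statement reduces to the amplitude `(UNPREP * PREP) 0 0`. This
is the overlap of `UNPREP† e₀` with `PREP e₀`, two states supported on the first `s` basis vectors,
to which the `p`-th one contributes `√(A p) / √α * (σ p * √(A p) / √α) = σ p * A p / α`.
-/

open Matrix
open scoped Kronecker

theorem kronecker_one_mul_kronecker_one_apply {R l m n κ : Type*} [CommSemiring R] [Fintype m]
    [Fintype κ] [DecidableEq κ] (B : Matrix l m R) (C : Matrix m n R) (a : l) (b : n) (i j : κ) :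
    ((B ⊗ₖ (1 : Matrix κ κ R)) * (C ⊗ₖ (1 : Matrix κ κ R))) (a, i) (b, j) =
      (B * C) a b * if i = j then 1 else 0 := by
  rw [← mul_kronecker_mul, one_mul, kronecker_apply, one_apply]

theorem star_conjTranspose_mulVec_single_one {R m n : Type*} [NonAssocSemiring R] [StarRing R]
    [Fintype m] [DecidableEq m] (B : Matrix m n R) (i : m) :
    star (Bᴴ *ᵥ Pi.single i 1) = B.row i := by
  ext j
  rw [mulVec_single_one, Pi.star_apply, col_apply, conjTranspose_apply, star_star, row_apply]

theorem sqrt_div_sqrt_mul_mul_sqrt_div_sqrt {a α : ℝ} (ha : 0 ≤ a) (hα : 0 ≤ α) (z : ℂ) :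
    (√a : ℂ) / (√α : ℂ) * (z * (√a : ℂ) / (√α : ℂ)) = z * (a : ℂ) / (α : ℂ) := by
  have ofReal_sqrt_mul_self {x : ℝ} (hx : 0 ≤ x) : (√x : ℂ) * (√x : ℂ) = x := by
    exact_mod_cast Real.mul_self_sqrt hx
  rw [div_mul_div_comm, mul_left_comm, ofReal_sqrt_mul_self ha, ofReal_sqrt_mul_self hα]

/-- The vector of length `N` that agrees with `f` on its first `s` entries and vanishes elsewhere:
the coordinates of a state supported on the first `s` basis vectors. For `N < s` it truncates
`f`. -/
def zeroPad {R : Type*} [Zero R] {s : ℕ} (N : ℕ) (f : Fin s → R) : Fin N → R :=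
  fun p ↦ if h : (p : ℕ) < s then f ⟨p, h⟩ else 0

theorem star_zeroPad {R : Type*} [AddMonoid R] [StarAddMonoid R] {s N : ℕ} (f : Fin s → R) :
    star (zeroPad N f) = zeroPad N (star f) := by
  ext p
  simp only [zeroPad, Pi.star_apply, apply_dite star, star_zero]

theorem zeroPad_dotProduct_zeroPad {R : Type*} [NonUnitalNonAssocSemiring R] {s N : ℕ}
    (hs : s ≤ N) (f g : Fin s → R) : zeroPad N f ⬝ᵥ zeroPad N g = f ⬝ᵥ g := by
  symm
  refine Fintype.sum_of_injective (Fin.castLE hs) (Fin.castLE_injective hs) _ _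
    (fun p hp ↦ ?_) fun p ↦ ?_
  · have hsp : ¬ (p : ℕ) < s := fun h ↦ hp ⟨⟨p, h⟩, rfl⟩
    simp only [zeroPad, dif_neg hsp, mul_zero]
  · simp only [zeroPad, Fin.val_castLE, p.isLt, dif_pos, Fin.eta]

section StatePreparation

variable {N s : ℕ} {A : Fin s → ℝ} {α : ℝ} {σ : Fin s → ℂ}
  {PREP UNPREP : Matrix (Fin N) (Fin N) ℂ} {o : Fin N}

theorem unprep_row_eq_zeroPad
    (hUNPREP : UNPREPᴴ *ᵥ Pi.single o 1 = zeroPad N fun p ↦ (√(A p) : ℂ) / (√α : ℂ)) :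
    UNPREP.row o = zeroPad N fun p ↦ (√(A p) : ℂ) / (√α : ℂ) := by
  have star_amplitude : (star fun p ↦ (√(A p) : ℂ) / (√α : ℂ)) = fun p ↦ (√(A p) : ℂ) / (√α : ℂ) :=
    funext fun p ↦ by simp
  rw [← star_conjTranspose_mulVec_single_one, hUNPREP, star_zeroPad, star_amplitude]

theorem unprep_mul_prep_apply (hs : s ≤ N) (hA : ∀ p, 0 ≤ A p) (hα : 0 < α)
    (hPREP : PREP.col o = zeroPad N fun p ↦ σ p * (√(A p) : ℂ) / (√α : ℂ))
    (hUNPREP : UNPREPᴴ *ᵥ Pi.single o 1 = zeroPad N fun p ↦ (√(A p) : ℂ) / (√α : ℂ)) :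
    (UNPREP * PREP) o o = (∑ p, σ p * (A p : ℂ)) / (α : ℂ) :=
  calc (UNPREP * PREP) o o = UNPREP.row o ⬝ᵥ PREP.col o := mul_apply'
    _ = ∑ p, (√(A p) : ℂ) / (√α : ℂ) * (σ p * (√(A p) : ℂ) / (√α : ℂ)) := by
      rw [unprep_row_eq_zeroPad hUNPREP, hPREP, zeroPad_dotProduct_zeroPad hs, dotProduct]
    _ = ∑ p, σ p * (A p : ℂ) / (α : ℂ) :=
      Fintype.sum_congr _ _ fun p ↦ sqrt_div_sqrt_mul_mul_sqrt_div_sqrt (hA p) hα.le (σ p)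
    _ = (∑ p, σ p * (A p : ℂ)) / (α : ℂ) := (Finset.sum_div ..).symm

theorem block_encoding_without_oracle_diagonal_general {κ : Type*} [Fintype κ] [DecidableEq κ]
    (hs : s ≤ N) (hA : ∀ p, 0 ≤ A p) (hα : α = ∑ p, A p) (hα₀ : α ≠ 0)
    (hPREP : PREP.col o = zeroPad N fun p ↦ σ p * (√(A p) : ℂ) / (√α : ℂ))
    (hUNPREP : UNPREPᴴ *ᵥ Pi.single o 1 = zeroPad N fun p ↦ (√(A p) : ℂ) / (√α : ℂ)) (i j : κ) :
    ((UNPREP ⊗ₖ (1 : Matrix κ κ ℂ)) * (PREP ⊗ₖ (1 : Matrix κ κ ℂ))) (o, i) (o, j) =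
      ((∑ p, σ p * (A p : ℂ)) / (α : ℂ)) * (if i = j then 1 else 0) := by
  have hα_pos : 0 < α := (hα ▸ Finset.sum_nonneg fun p _ ↦ hA p).lt_of_ne' hα₀
  rw [kronecker_one_mul_kronecker_one_apply, unprep_mul_prep_apply hs hA hα_pos hPREP hUNPREP]

end StatePreparation

/-- **Without the index-mapping oracle, the block-encoded matrix is `η` times the identity**,
where `η = (∑_{p<s} σ p * A p) / α`. -/
theorem block_encoding_without_oracle_diagonal
    (m s : ℕ) (hm : 0 < m) (hs1 : 1 ≤ s) (hs2 : s ≤ 2 ^ m)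
    (A : Fin s → ℝ) (hA : ∀ p, 0 < A p)
    (α : ℝ) (hα : α = ∑ p, A p)
    (σ : Fin s → ℂ) (hσ : ∀ p, ‖σ p‖ = 1)
    (PREP : Matrix (Fin (2 ^ m)) (Fin (2 ^ m)) ℂ)
    (hPREP : PREP ∈ Matrix.unitaryGroup (Fin (2 ^ m)) ℂ)
    (hPREPcol : ∀ p : Fin (2 ^ m), PREP p 0 =
      if h : (p : ℕ) < s then
        σ ⟨p, h⟩ * (Real.sqrt (A ⟨p, h⟩) : ℂ) / (Real.sqrt α : ℂ) else 0)
    (UNPREP : Matrix (Fin (2 ^ m)) (Fin (2 ^ m)) ℂ)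
    (hUNPREP : UNPREP ∈ Matrix.unitaryGroup (Fin (2 ^ m)) ℂ)
    (hUNPREPcol : ∀ p : Fin (2 ^ m), UNPREPᴴ.mulVec (Pi.single 0 1) p =
      if h : (p : ℕ) < s then ((Real.sqrt (A ⟨p, h⟩) : ℂ) / (Real.sqrt α : ℂ)) else 0) :
    ∀ (n : ℕ), 0 < n → ∀ i j : Fin (2 ^ n),
      ((UNPREP ⊗ₖ (1 : Matrix (Fin 2 × Fin (2 ^ n)) (Fin 2 × Fin (2 ^ n)) ℂ)) *
        (PREP ⊗ₖ (1 : Matrix (Fin 2 × Fin (2 ^ n)) (Fin 2 × Fin (2 ^ n)) ℂ)))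
          (0, 0, i) (0, 0, j)
        = ((∑ p, σ p * (A p : ℂ)) / (α : ℂ)) * (if i = j then 1 else 0) := by
  intro n _ i j
  have hα₀ : α ≠ 0 := hα ▸ (Finset.sum_pos (fun p _ ↦ hA p) ⟨⟨0, hs1⟩, Finset.mem_univ _⟩).ne'
  simpa using block_encoding_without_oracle_diagonal_general hs2 (fun p ↦ (hA p).le) hα hα₀
    (funext hPREPcol) (funext hUNPREPcol) ((0 : Fin 2), i) (0, j)
end

section
/- Let P ≥ 1 and 1 ≤ n < P. Let F ⊆ Fin P be a set of indices with |F| = P − n, and let S ⊆ (Fin P → Bool) be a set of control strings with |S| = 2^n such that all elements of S agree on every coordinate in F, with common values ã i for i ∈ F. Then the product over S (in any order) of the gates MCX(a) = |a⟩⟨a| ⊗ X + (1 − |a⟩⟨a|) ⊗ 1 equals the partially-controlled gate Q ⊗ X + (1 − Q) ⊗ 1, where Q = ∑_{b : Fin P → Bool, b i = ã i for all i ∈ F} |b⟩⟨b| is the orthogonal projector onto the subspace of control-register basis states agreeing with ã on F. (The factors commute, so the product is well defined.) -/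
/-!
A controlled gate is `Q ⊗ U + (1 - Q) ⊗ 1 = 1 + Q ⊗ (U - 1)`, so two of them with the same `U` and
with controls satisfying `Q₁ * Q₂ = 0` multiply to the gate controlled by `Q₁ + Q₂`. Projectors onto
distinct basis states are orthogonal, hence the product over `S` is controlled by `∑ a ∈ S, |a⟩⟨a|`.
Finally `S` lies in the subcube fixed by `atil` on `F` and has as many elements, so it is all of it.
-/

open Matrix
open scoped Kronecker

/-- The rank-one orthogonal projector `|a⟩⟨a|` onto the computational basis state
indexed by the binary string `a : Fin P → Bool`. -/
noncomputable def ketBraProj (P : ℕ) (a : Fin P → Bool) :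
    Matrix (Fin P → Bool) (Fin P → Bool) ℂ :=
  Matrix.of fun x y => if x = a ∧ y = a then 1 else 0

/-- The Pauli-X matrix on one qubit. -/
noncomputable def pauliX : Matrix (Fin 2) (Fin 2) ℂ := !![0, 1; 1, 0]

/-- The multi-controlled-X gate with control string `a`:
`MCX a = |a⟩⟨a| ⊗ X + (1 - |a⟩⟨a|) ⊗ 1` on `ℂ^(2^P) ⊗ ℂ²`. -/
noncomputable def MCX (P : ℕ) (a : Fin P → Bool) :
    Matrix ((Fin P → Bool) × Fin 2) ((Fin P → Bool) × Fin 2) ℂ :=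
  ketBraProj P a ⊗ₖ pauliX + (1 - ketBraProj P a) ⊗ₖ 1

section ControlledGate

variable {m k R : Type*} [DecidableEq m] [DecidableEq k] [CommRing R]

/-- The gate applying `U` to the target register on the range of the projector `Q` of the control
register, and the identity on its kernel. The formula is used for an arbitrary matrix `Q`. -/
def controlledGate (Q : Matrix m m R) (U : Matrix k k R) : Matrix (m × k) (m × k) R :=
  Q ⊗ₖ U + (1 - Q) ⊗ₖ 1

lemma controlledGate_eq_one_add (Q : Matrix m m R) (U : Matrix k k R) :
    controlledGate Q U = 1 + Q ⊗ₖ (U - 1) := by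
  have split_U : Q ⊗ₖ U = Q ⊗ₖ (U - 1) + Q ⊗ₖ 1 := by rw [← kronecker_add, sub_add_cancel]
  rw [controlledGate, split_U, add_assoc, ← add_kronecker, add_sub_cancel, one_kronecker_one,
    add_comm]

lemma controlledGate_zero (U : Matrix k k R) : controlledGate (0 : Matrix m m R) U = 1 := by
  rw [controlledGate_eq_one_add, zero_kronecker, add_zero]

variable [Fintype m] [Fintype k]

lemma controlledGate_mul_of_mul_eq_zero {Q₁ Q₂ : Matrix m m R} (h : Q₁ * Q₂ = 0)
    (U : Matrix k k R) :
    controlledGate Q₁ U * controlledGate Q₂ U = controlledGate (Q₁ + Q₂) U := by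
  have cross_term : Q₁ ⊗ₖ (U - 1) * Q₂ ⊗ₖ (U - 1) = 0 := by
    rw [← mul_kronecker_mul, h, zero_kronecker]
  simp only [controlledGate_eq_one_add, add_kronecker, add_mul, mul_add, one_mul, mul_one,
    cross_term, add_zero]
  abel

lemma prod_map_controlledGate {L : List (Matrix m m R)} (hL : L.Pairwise (· * · = 0))
    (U : Matrix k k R) : (L.map (controlledGate · U)).prod = controlledGate L.sum U := by
  induction hL with
  | nil => exact (controlledGate_zero U).symm
  | @cons Q L hQ _ ih =>
    have head_mul_sum : Q * L.sum = 0 := by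
      rw [← List.map_id' L, ← List.sum_map_mul_left]
      exact List.sum_eq_zero (List.forall_mem_map.mpr hQ)
    rw [List.map_cons, List.prod_cons, ih, controlledGate_mul_of_mul_eq_zero head_mul_sum,
      List.sum_cons]

lemma prod_map_controlledGate_single {l : List m} (hl : l.Nodup) (U : Matrix k k R) :
    (l.map fun a => controlledGate (single a a 1) U).prod
      = controlledGate (∑ a ∈ l.toFinset, single a a 1) U := by
  have orthogonal : (l.map fun a => single a a (1 : R)).Pairwise (· * · = 0) :=
    List.pairwise_map.mpr (hl.imp fun hab => single_mul_single_of_ne _ _ _ _ hab _)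
  rw [List.sum_toFinset _ hl, ← prod_map_controlledGate orthogonal, List.map_map]
  rfl

end ControlledGate

section Subcube

variable {ι : Type*} [Fintype ι] [DecidableEq ι] {α : ι → Type*} [∀ i, Fintype (α i)]
  (F : Finset ι) (c : ∀ i, α i) [DecidablePred fun b : ∀ i, α i => ∀ i ∈ F, b i = c i]

lemma card_filter_forall_mem_eq :
    (Finset.univ.filter fun b : ∀ i, α i => ∀ i ∈ F, b i = c i).card
      = ∏ i ∈ Fᶜ, Fintype.card (α i) := by
  have eq_piFinset : (Finset.univ.filter fun b : ∀ i, α i => ∀ i ∈ F, b i = c i)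
      = Fintype.piFinset fun i => if i ∈ F then {c i} else Finset.univ := by
    ext b
    simp only [Finset.mem_filter_univ, Fintype.mem_piFinset]
    refine forall_congr' fun i => ?_
    split_ifs with hi <;> simp [hi]
  have card_fixed : ∏ i ∈ F, (if i ∈ F then {c i} else Finset.univ : Finset (α i)).card = 1 :=
    Finset.prod_eq_one fun i hi => by rw [if_pos hi, Finset.card_singleton]
  rw [eq_piFinset, Fintype.card_piFinset, ← Finset.prod_mul_prod_compl F, card_fixed, one_mul]
  exact Finset.prod_congr rfl fun i hi => by
    rw [if_neg (Finset.mem_compl.mp hi), Finset.card_univ]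

theorem mcx_composition_subcube_general [∀ i, DecidableEq (α i)] {k R : Type*} [Fintype k]
    [DecidableEq k] [CommRing R] (U : Matrix k k R) {l : List (∀ i, α i)} (hl : l.Nodup)
    (hcard : l.toFinset.card = ∏ i ∈ Fᶜ, Fintype.card (α i))
    (hagree : ∀ a ∈ l.toFinset, ∀ i ∈ F, a i = c i) :
    (l.map fun a => controlledGate (single a a 1) U).prod
      = controlledGate (∑ b with ∀ i ∈ F, b i = c i, single b b 1) U := by
  have subset_subcube : l.toFinset ⊆ Finset.univ.filter fun b : ∀ i, α i => ∀ i ∈ F, b i = c i :=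
    fun a ha => (Finset.mem_filter_univ a).mpr (hagree a ha)
  have card_le : (Finset.univ.filter fun b : ∀ i, α i => ∀ i ∈ F, b i = c i).card
      ≤ l.toFinset.card := by
    rw [card_filter_forall_mem_eq, hcard]
  rw [prod_map_controlledGate_single hl, Finset.eq_of_subset_of_card_le subset_subcube card_le]

end Subcube

lemma ketBraProj_eq_single (P : ℕ) (a : Fin P → Bool) : ketBraProj P a = single a a 1 := by
  ext x y
  simp only [ketBraProj, of_apply, single_apply, eq_comm]

lemma MCX_eq_controlledGate (P : ℕ) :
    MCX P = fun a => controlledGate (single a a 1) pauliX := by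
  funext a
  rw [MCX, ketBraProj_eq_single, controlledGate]

/-- **Composition of MCX gates over a subcube of control strings.**
If the `2^n` control strings of `S` all agree on the `P - n` coordinates of `F`
(with common values `atil i` for `i ∈ F`), then the product of the gates `MCX a`
over `S`, in any order, equals the partially-controlled gate `Q ⊗ X + (1 - Q) ⊗ 1`,
where `Q` projects onto the basis states agreeing with `atil` on `F`. -/
theorem mcx_composition_subcube
    (P n : ℕ) (hP : 1 ≤ P) (hn : 1 ≤ n) (hnP : n < P)
    (F : Finset (Fin P)) (hF : F.card = P - n)
    (S : Finset (Fin P → Bool)) (hScard : S.card = 2 ^ n)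
    (atil : Fin P → Bool) (hagree : ∀ a ∈ S, ∀ i ∈ F, a i = atil i)
    (l : List (Fin P → Bool)) (hl : l.Nodup) (hlS : l.toFinset = S) :
    (l.map (MCX P)).prod
      = (∑ b ∈ Finset.univ.filter fun b : Fin P → Bool => ∀ i ∈ F, b i = atil i,
            ketBraProj P b) ⊗ₖ pauliX
        + (1 - ∑ b ∈ Finset.univ.filter fun b : Fin P → Bool => ∀ i ∈ F, b i = atil i,
            ketBraProj P b) ⊗ₖ 1 := by
  subst hlS
  have hcard : l.toFinset.card = ∏ _i ∈ Fᶜ, Fintype.card Bool := by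
    rw [hScard, Finset.prod_const, Fintype.card_bool, Finset.card_compl, Fintype.card_fin, hF,
      Nat.sub_sub_self hnP.le]
  rw [← controlledGate, MCX_eq_controlledGate]
  simp only [ketBraProj_eq_single]
  exact mcx_composition_subcube_general F atil pauliX hl hcard hagree
end
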